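/- arXiv:1211.2941 — 2 statements merged into one kernel-verified Lean document; each statement's English description precedes it below -/
import Mathlib

section
/- Let L and S be positive integers with S ≤ L, let γ ∈ (0,1) be the positive root of Lγ + Sγ² = 1, and let (ξ^j)_{j≥1} be the (L,S)-sequence of points. For each N, let P_{L,S}(N) = { ((n−1)/N, ξⁿ) : n = 1, …, N } be the (L,S)-point set à la van der Corput of order N. Then there exists a constant C₁ > 0 such that for every integer N ≥ 2 one has N · D₂(P_{L,S}(N)) ≤ C₁ · log N. -/
open Finset Real

noncomputable section

/-- The `k`-th digit of `n` in base `b`. -/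
def lsDigit (b n k : ℕ) : ℕ := n / b ^ k % b

/-- Membership in the set `N_{L,S}`: for every `k`, the pair of consecutive digits
`(a_k(n), a_{k+1}(n))` in base `L+S` does not lie in
`{L,…,L+S−1} × {1,…,L+S−1}`. -/
def memNLS (L S n : ℕ) : Prop :=
  ∀ k : ℕ, ¬ (L ≤ lsDigit (L + S) n k ∧ lsDigit (L + S) n k ≤ L + S - 1 ∧
      1 ≤ lsDigit (L + S) n (k + 1) ∧ lsDigit (L + S) n (k + 1) ≤ L + S - 1)

/-- The modified digit `ã`: `ã = a` if `a ≤ L−1`, and `ã = L + γ(a−L)` if `L ≤ a`. -/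
def lsTilde (L : ℕ) (γ : ℝ) (a : ℕ) : ℝ :=
  if a < L then (a : ℝ) else (L : ℝ) + γ * ((a : ℝ) - (L : ℝ))

/-- The radical-inverse-type function `φ_{L,S}(n) = Σ_{k=0}^{M} ã_k(n) γ^{k+1}`,
with `M = ⌊log_{L+S} n⌋`. -/
def lsPhi (L S : ℕ) (γ : ℝ) (n : ℕ) : ℝ :=
  ∑ k ∈ Finset.range (Nat.log (L + S) n + 1),
    lsTilde L γ (lsDigit (L + S) n k) * γ ^ (k + 1)

/-- The `(L,S)`-sequence of points: `ξ^j = φ_{L,S}(n_j)` where `n_1 < n_2 < ⋯`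
is the increasing enumeration of `N_{L,S}` (so `n_j = Nat.nth (memNLS L S) (j-1)`). -/
def lsSeq (L S : ℕ) (γ : ℝ) (j : ℕ) : ℝ :=
  lsPhi L S γ (Nat.nth (memNLS L S) (j - 1))

/-- One-dimensional discrepancy of the first `N` terms `x 1, …, x N` of a sequence:
`sup_{0 ≤ a < b ≤ 1} |(1/N) Σ_{j=1}^N χ_{[a,b)}(x j) − (b−a)|`. -/
def discrep (x : ℕ → ℝ) (N : ℕ) : ℝ :=
  ⨆ p : {p : ℝ × ℝ // 0 ≤ p.1 ∧ p.1 < p.2 ∧ p.2 ≤ 1},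
    |(∑ j ∈ Finset.Icc 1 N,
        Set.indicator (Set.Ico p.1.1 p.1.2) (fun _ => (1 : ℝ)) (x j)) / N
      - (p.1.2 - p.1.1)|

/-- Two-dimensional (star) discrepancy of the first `N` terms of a sequence of points
in the unit square:
`sup_{0 < a ≤ 1, 0 < b ≤ 1} |(1/N) Σ_{j=1}^N χ_{[0,a)×[0,b)}(x j) − ab|`. -/
def discrep2 (x : ℕ → ℝ × ℝ) (N : ℕ) : ℝ :=
  ⨆ p : {p : ℝ × ℝ // 0 < p.1 ∧ p.1 ≤ 1 ∧ 0 < p.2 ∧ p.2 ≤ 1},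
    |(∑ j ∈ Finset.Icc 1 N,
        Set.indicator (Set.Ico (0 : ℝ) p.1.1) (fun _ => (1 : ℝ)) (x j).1 *
        Set.indicator (Set.Ico (0 : ℝ) p.1.2) (fun _ => (1 : ℝ)) (x j).2) / N
      - p.1.1 * p.1.2|

/-!
Write `b = L + S`, let `T X` be the number of admissible integers below `X`, and let `A c X` be
the number of those with `φ < c`. An admissible integer is either `b q + d` with `d < L` and `q`
admissible, or `b² q + (L + e)` with `e < S` and `q` admissible, and on these two families `φ` is
`γ (d + φ q)` and `γ L + γ² (e + φ q)`. Up to bounded errors, this expresses `T X` and `A c X`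
through counts at `X / b` and `X / b²`.

Applied to `T`, it makes the defect `T (X / b) - γ T X` a perturbed linear recursion with
multiplier `-S γ`. Since `S ≤ L` forces `S γ < 1`, the defect stays bounded. Applied to `A`, it
involves only one threshold `t` for which `A t` is neither `0` nor `T`, so removing one or two
digits of `X` changes the bound for `A c X - c T X` by a constant, and the deviation is at most
linear in the number of digits of `X`. Finally, `T (b ^ (2 k)) ≥ b ^ k`, so the `N`-th admissible
integer has `O(log N)` digits.
-/

section Count

variable (p : ℕ → Prop) [DecidablePred p]

lemma count_mul_eq_sum (b q : ℕ) :
    Nat.count p (b * q) = ∑ d ∈ range b, Nat.count (fun i => p (b * i + d)) q := by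
  induction q with
  | zero => simp
  | succ q ih =>
    simp only [mul_add_one, Nat.count_add, Nat.count_succ, sum_add_distrib, ih]
    rw [Nat.count_eq_card_filter_range, card_filter]

lemma count_mem_Icc_sum_count_digit {b : ℕ} (hb : 0 < b) (X : ℕ) :
    Nat.count p X ∈ Set.Icc (∑ d ∈ range b, Nat.count (fun i => p (b * i + d)) (X / b))
      (∑ d ∈ range b, Nat.count (fun i => p (b * i + d)) (X / b) + b) := by
  rw [← count_mul_eq_sum]
  refine ⟨Nat.count_monotone p (Nat.mul_div_le X b), ?_⟩
  calc Nat.count p X = Nat.count p (b * (X / b) + X % b) := by rw [Nat.div_add_mod]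
    _ ≤ Nat.count p (b * (X / b)) + b := by
      rw [Nat.count_add]
      gcongr
      exact (Nat.count_le _).trans (Nat.mod_lt X hb).le

lemma count_and_eq_count_nth (r : ℕ → Prop) [DecidablePred r]
    [DecidablePred fun n => p n ∧ r n] (X : ℕ) :
    Nat.count (fun n => p n ∧ r n) X = Nat.count (fun i => r (Nat.nth p i)) (Nat.count p X) := by
  induction X with
  | zero => simp
  | succ X ih =>
    by_cases h : p X <;> simp [Nat.count_succ, ih, h, Nat.nth_count]

end Count

lemma abs_cast_sub_le_of_mem_Icc {a s e : ℕ} (h : a ∈ Set.Icc s (s + e)) :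
    |(a : ℝ) - s| ≤ e := by
  have h₁ : (s : ℝ) ≤ a := by exact_mod_cast h.1
  have h₂ : (a : ℝ) ≤ s + e := by exact_mod_cast h.2
  rw [abs_of_nonneg (sub_nonneg.2 h₁)]
  linarith

section SumShift

variable {F : ℝ → ℝ} {M : ℝ}

lemma sum_shift_eq_mul (hone : ∀ t, 1 ≤ t → F t = M) {n : ℕ} {x : ℝ} (hx : n ≤ x) :
    ∑ d ∈ range n, F (x - d) = n * M := by
  have hterm : ∀ d ∈ range n, F (x - d) = M := fun d hd => hone _ (by
    have : (d : ℝ) + 1 ≤ n := by exact_mod_cast mem_range.1 hd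
    linarith)
  simp [sum_congr rfl hterm]

lemma abs_sum_shift_sub_mul_le (hzero : ∀ t ≤ 0, F t = 0) (hone : ∀ t, 1 ≤ t → F t = M) {B : ℝ}
    (hF : ∀ t ∈ Set.Icc (0 : ℝ) 1, |F t - t * M| ≤ B) {n : ℕ} {x : ℝ} (hx : 0 ≤ x) (hxn : x ≤ n) :
    |∑ d ∈ range n, F (x - d) - x * M| ≤ B := by
  induction n with
  | zero =>
    obtain rfl : x = 0 := le_antisymm (by simpa using hxn) hx
    simpa [hzero 0 le_rfl] using hF 0 (by simp)
  | succ n ih =>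
    push_cast at hxn
    rw [sum_range_succ]
    rcases le_total x n with h | h
    · simpa [hzero (x - n) (by linarith)] using ih h
    · rw [sum_shift_eq_mul hone h]
      convert hF (x - n) ⟨by linarith, by linarith⟩ using 2
      ring

end SumShift

section Root

variable {L S : ℕ} {γ : ℝ}

lemma one_lt_add_of_root (hγ : 0 < γ) (hγ1 : γ < 1) (hroot : L * γ + S * γ ^ 2 = 1) :
    1 < L + S := by
  have h : 1 < (L : ℝ) + S := by
    by_contra! hle
    nlinarith [mul_le_of_le_one_left hγ.le hle,
      mul_nonneg (S.cast_nonneg (α := ℝ)) (mul_nonneg hγ.le (sub_nonneg.2 hγ1.le))]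
  exact_mod_cast h

lemma le_one_of_root (hL : 0 < L) (hγ : 0 < γ) (hroot : L * γ + S * γ ^ 2 = 1) : γ ≤ 1 := by
  have hγL : γ ≤ L * γ := le_mul_of_one_le_left hγ.le (by exact_mod_cast hL)
  have hSγ : 0 ≤ S * γ ^ 2 := by positivity
  linarith

lemma mul_lt_one_of_root (hSL : S ≤ L) (hγ : 0 < γ) (hroot : L * γ + S * γ ^ 2 = 1) :
    S * γ < 1 := by
  by_contra! h
  have hSLγ : (S : ℝ) * γ ≤ L * γ := by gcongr
  have hSγ : γ ≤ S * γ ^ 2 := by nlinarith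
  linarith

end Root

section Digits

variable {L S : ℕ}

lemma lsDigit_zero_right (b n : ℕ) : lsDigit b n 0 = n % b := by
  simp [lsDigit]

lemma lsDigit_succ (b n k : ℕ) : lsDigit b n (k + 1) = lsDigit b (n / b) k := by
  simp [lsDigit, pow_succ', Nat.div_div_eq_div_mul]

lemma memNLS_iff (hb : 0 < L + S) (n : ℕ) :
    memNLS L S n ↔
      ¬ (L ≤ n % (L + S) ∧ n / (L + S) % (L + S) ≠ 0) ∧ memNLS L S (n / (L + S)) := by
  have hle (m k : ℕ) : lsDigit (L + S) m k ≤ L + S - 1 := Nat.le_sub_one_of_lt (Nat.mod_lt _ hb)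
  simp only [memNLS, hle, true_and, and_true, Nat.one_le_iff_ne_zero]
  rw [← Nat.and_forall_add_one]
  simp only [lsDigit_succ, lsDigit_zero_right]

lemma memNLS_mul_add_iff {d : ℕ} (hd : d < L + S) (q : ℕ) :
    memNLS L S ((L + S) * q + d) ↔ ¬ (L ≤ d ∧ q % (L + S) ≠ 0) ∧ memNLS L S q := by
  have hb : 0 < L + S := by omega
  rw [memNLS_iff hb, Nat.mul_add_mod, Nat.mod_eq_of_lt hd, Nat.mul_add_div hb, Nat.div_eq_of_lt hd,
    add_zero]

lemma memNLS_mul_add_iff_of_lt {d : ℕ} (hd : d < L) (q : ℕ) :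
    memNLS L S ((L + S) * q + d) ↔ memNLS L S q := by
  simp [memNLS_mul_add_iff (show d < L + S by omega), hd]

lemma memNLS_mul_iff (hL : 0 < L) (q : ℕ) : memNLS L S ((L + S) * q) ↔ memNLS L S q :=
  memNLS_mul_add_iff_of_lt hL q

lemma memNLS_mul_add_iff_of_ge {e : ℕ} (he : e < S) (q : ℕ) :
    memNLS L S ((L + S) * q + (L + e)) ↔ q % (L + S) = 0 ∧ memNLS L S q := by
  simp [memNLS_mul_add_iff (show L + e < L + S by omega)]

lemma memNLS_mul_mul_add_iff (hL : 0 < L) {e : ℕ} (he : e < S) (q : ℕ) :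
    memNLS L S ((L + S) * ((L + S) * q) + (L + e)) ↔ memNLS L S q := by
  simp [memNLS_mul_add_iff_of_ge he, memNLS_mul_iff hL]

lemma memNLS_zero (L S : ℕ) : memNLS L S 0 := by
  simp [memNLS, lsDigit]

lemma memNLS_one (hb : 1 < L + S) : memNLS L S 1 := by
  simpa [memNLS_zero] using memNLS_mul_add_iff hb 0

lemma infinite_memNLS (hL : 0 < L) (hb : 1 < L + S) : {n | memNLS L S n}.Infinite := by
  refine Set.infinite_of_injective_forall_mem (Nat.pow_right_injective hb) fun k => ?_
  induction k with
  | zero => simpa using memNLS_one hb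
  | succ k ih => simpa only [Set.mem_ofPred_eq, pow_succ', memNLS_mul_iff hL] using ih

end Digits

section RadicalInverse

variable {L S : ℕ} {γ : ℝ}

lemma lsTilde_of_lt {d : ℕ} (hd : d < L) (γ : ℝ) : lsTilde L γ d = d := if_pos hd

lemma lsTilde_add (L : ℕ) (γ : ℝ) (e : ℕ) : lsTilde L γ (L + e) = L + γ * e := by
  simp [lsTilde]

lemma lsTilde_nonneg (L : ℕ) (hγ : 0 ≤ γ) (d : ℕ) : 0 ≤ lsTilde L γ d := by
  rcases lt_or_ge d L with hd | hd
  · rw [lsTilde_of_lt hd]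
    positivity
  · obtain ⟨e, rfl⟩ := Nat.exists_eq_add_of_le hd
    rw [lsTilde_add]
    positivity

lemma lsPhi_nonneg (L S : ℕ) (hγ : 0 ≤ γ) (n : ℕ) : 0 ≤ lsPhi L S γ n :=
  sum_nonneg fun _ _ => mul_nonneg (lsTilde_nonneg L hγ _) (pow_nonneg hγ _)

lemma lsPhi_zero (hL : 0 < L) (S : ℕ) (γ : ℝ) : lsPhi L S γ 0 = 0 := by
  simp [lsPhi, lsDigit, lsTilde_of_lt hL]

lemma lsPhi_eq (hL : 0 < L) (hb : 1 < L + S) (γ : ℝ) (n : ℕ) :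
    lsPhi L S γ n = γ * (lsTilde L γ (n % (L + S)) + lsPhi L S γ (n / (L + S))) := by
  rcases lt_or_ge n (L + S) with h | h
  · rw [Nat.div_eq_of_lt h, lsPhi_zero hL, lsPhi, Nat.log_of_lt h]
    simp [lsDigit_zero_right, mul_comm]
  · rw [lsPhi, Nat.log_of_one_lt_of_le hb h, sum_range_succ', lsPhi, mul_add, mul_sum, add_comm]
    congr 1
    · simp [lsDigit_zero_right, mul_comm]
    · refine sum_congr rfl fun k _ => ?_
      rw [lsDigit_succ]
      ring

lemma lsPhi_mul_add (hL : 0 < L) (hb : 1 < L + S) (γ : ℝ) {d : ℕ} (hd : d < L + S) (q : ℕ) :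
    lsPhi L S γ ((L + S) * q + d) = γ * (lsTilde L γ d + lsPhi L S γ q) := by
  rw [lsPhi_eq hL hb, Nat.mul_add_mod, Nat.mod_eq_of_lt hd, Nat.mul_add_div (by omega),
    Nat.div_eq_of_lt hd, add_zero]

lemma lsPhi_mul_add_of_lt (hb : 1 < L + S) (γ : ℝ) {d : ℕ} (hd : d < L) (q : ℕ) :
    lsPhi L S γ ((L + S) * q + d) = γ * (d + lsPhi L S γ q) := by
  rw [lsPhi_mul_add (by omega) hb γ (by omega), lsTilde_of_lt hd]

lemma lsPhi_mul_mul_add (hL : 0 < L) (hb : 1 < L + S) (γ : ℝ) {e : ℕ} (he : e < S) (q : ℕ) :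
    lsPhi L S γ ((L + S) * ((L + S) * q) + (L + e)) = γ * (L + γ * (e + lsPhi L S γ q)) := by
  have hmul : lsPhi L S γ ((L + S) * q) = γ * lsPhi L S γ q := by
    simpa using lsPhi_mul_add_of_lt hb γ hL q
  rw [lsPhi_mul_add hL hb γ (by omega), lsTilde_add, hmul]
  ring

lemma memNLS_induction (hL : 0 < L) (hb : 1 < L + S) {P : ℕ → Prop} (zero : P 0)
    (low : ∀ d < L, ∀ q, P q → P ((L + S) * q + d))
    (high : ∀ e < S, ∀ q, P q → P ((L + S) * ((L + S) * q) + (L + e)))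
    {n : ℕ} (hn : memNLS L S n) : P n := by
  induction n using Nat.strong_induction_on with
  | _ n ih =>
    rcases n.eq_zero_or_pos with rfl | hpos
    · exact zero
    obtain ⟨q, d, hd, rfl⟩ : ∃ q d, d < L + S ∧ n = (L + S) * q + d :=
      ⟨n / (L + S), n % (L + S), Nat.mod_lt _ (by omega), (Nat.div_add_mod _ _).symm⟩
    rcases lt_or_ge d L with hdL | hdL
    · exact low d hdL q (ih q (by nlinarith) ((memNLS_mul_add_iff_of_lt hdL q).1 hn))
    · obtain ⟨e, rfl⟩ := Nat.exists_eq_add_of_le hdL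
      have he : e < S := by omega
      obtain ⟨q, rfl⟩ := Nat.dvd_of_mod_eq_zero ((memNLS_mul_add_iff_of_ge he q).1 hn).1
      refine high e he q (ih q ?_ ((memNLS_mul_mul_add_iff hL he q).1 hn))
      calc q ≤ (L + S) * ((L + S) * q) :=
          (Nat.le_mul_of_pos_left q (by omega)).trans (Nat.le_mul_of_pos_left _ (by omega))
        _ < (L + S) * ((L + S) * q) + (L + e) := by omega

lemma lsPhi_lt_one (hL : 0 < L) (hb : 1 < L + S) (hγ : 0 < γ) (hroot : L * γ + S * γ ^ 2 = 1)
    {n : ℕ} (hn : memNLS L S n) : lsPhi L S γ n < 1 := by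
  refine memNLS_induction (P := fun n => lsPhi L S γ n < 1) hL hb ?_ (fun d hd q ih => ?_)
    (fun e he q ih => ?_) hn
  · simp [lsPhi_zero hL]
  · have hd' : (d : ℝ) + 1 ≤ L := by exact_mod_cast hd
    calc lsPhi L S γ ((L + S) * q + d) = γ * (d + lsPhi L S γ q) := lsPhi_mul_add_of_lt hb γ hd q
      _ < γ * L := by gcongr; linarith
      _ ≤ γ * L + S * γ ^ 2 := le_add_of_nonneg_right (by positivity)
      _ = 1 := by linarith
  · have he' : (e : ℝ) + 1 ≤ S := by exact_mod_cast he
    calc lsPhi L S γ ((L + S) * ((L + S) * q) + (L + e))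
        = γ * (L + γ * (e + lsPhi L S γ q)) := lsPhi_mul_mul_add hL hb γ he q
      _ < γ * (L + γ * S) := by gcongr; linarith
      _ = 1 := by linear_combination hroot

end RadicalInverse

section Counting

variable {L S : ℕ} {γ : ℝ}

open Classical in
/-- The number of elements of `N_{L,S}` below `X`. -/
def lsCount (L S X : ℕ) : ℕ := Nat.count (memNLS L S) X

open Classical in
/-- The number of elements `n` of `N_{L,S}` below `X` with `φ_{L,S}(n) < c`. -/
def lsCountLT (L S : ℕ) (γ c : ℝ) (X : ℕ) : ℕ :=
  Nat.count (fun n => memNLS L S n ∧ lsPhi L S γ n < c) X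

/-- The deviation of `lsCountLT` from the value `c * lsCount L S X` it would have if the points
`φ_{L,S}(n)` were uniformly distributed; the intended thresholds are `c ∈ [0, 1]`. -/
def lsDev (L S : ℕ) (γ c : ℝ) (X : ℕ) : ℝ := lsCountLT L S γ c X - c * lsCount L S X

lemma lsCount_zero (L S : ℕ) : lsCount L S 0 = 0 := by
  simp [lsCount]

lemma lsCount_one (L S : ℕ) : lsCount L S 1 = 1 := by
  classical
  simp [lsCount, memNLS_zero, Nat.count_succ]

lemma lsCount_mono (L S : ℕ) : Monotone (lsCount L S) := by
  classical
  exact Nat.count_monotone _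

lemma lsCountLT_of_nonpos (L S : ℕ) (hγ : 0 ≤ γ) {c : ℝ} (hc : c ≤ 0) (X : ℕ) :
    lsCountLT L S γ c X = 0 := by
  classical
  exact Nat.count_iff_forall_not.2 fun n _ h => (h.2.trans_le hc).not_ge (lsPhi_nonneg L S hγ n)

lemma lsCountLT_of_one_le (hL : 0 < L) (hb : 1 < L + S) (hγ : 0 < γ)
    (hroot : L * γ + S * γ ^ 2 = 1) {c : ℝ} (hc : 1 ≤ c) (X : ℕ) :
    lsCountLT L S γ c X = lsCount L S X := by
  classical
  have hiff (n : ℕ) : memNLS L S n ∧ lsPhi L S γ n < c ↔ memNLS L S n :=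
    and_iff_left_of_imp fun hn => (lsPhi_lt_one hL hb hγ hroot hn).trans_le hc
  simp only [lsCountLT, lsCount, hiff]

/-- Each application of `count_mem_Icc_sum_count_digit` costs an error `L + S`: once for the last
digit, and once more for each of the `S` large last digits, which must be preceded by a `0`. -/
lemma count_mem_Icc_of_imp_memNLS (hb : 0 < L + S) (p : ℕ → Prop) [DecidablePred p]
    (hp : ∀ n, p n → memNLS L S n) (X : ℕ) :
    Nat.count p X ∈ Set.Icc
      (∑ d ∈ range L, Nat.count (fun q => p ((L + S) * q + d)) (X / (L + S)) +
        ∑ e ∈ range S,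
          Nat.count (fun q => p ((L + S) * ((L + S) * q) + (L + e))) (X / (L + S) / (L + S)))
      (∑ d ∈ range L, Nat.count (fun q => p ((L + S) * q + d)) (X / (L + S)) +
        ∑ e ∈ range S,
          Nat.count (fun q => p ((L + S) * ((L + S) * q) + (L + e))) (X / (L + S) / (L + S)) +
        (S + 1) * (L + S)) := by
  have hhigh : ∀ e ∈ range S,
      Nat.count (fun q => p ((L + S) * q + (L + e))) (X / (L + S)) ∈ Set.Icc
        (Nat.count (fun q => p ((L + S) * ((L + S) * q) + (L + e))) (X / (L + S) / (L + S)))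
        (Nat.count (fun q => p ((L + S) * ((L + S) * q) + (L + e))) (X / (L + S) / (L + S)) +
          (L + S)) := by
    intro e he
    have h := count_mem_Icc_sum_count_digit (fun q => p ((L + S) * q + (L + e))) hb (X / (L + S))
    rwa [sum_eq_single_of_mem 0 (mem_range.2 hb)] at h
    intro d hd hd0
    refine Nat.count_iff_forall_not.2 fun q _ hpq => hd0 ?_
    have hmod := ((memNLS_mul_add_iff_of_ge (mem_range.1 he) _).1 (hp _ hpq)).1
    rwa [Nat.mul_add_mod, Nat.mod_eq_of_lt (mem_range.1 hd)] at hmod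
  have hlast := count_mem_Icc_sum_count_digit p hb X
  rw [sum_range_add] at hlast
  have hlower := sum_le_sum fun e he => (hhigh e he).1
  have hupper := sum_le_sum fun e he => (hhigh e he).2
  rw [sum_add_distrib, sum_const, card_range, smul_eq_mul] at hupper
  rw [add_one_mul]
  exact ⟨by linarith [hlast.1], by linarith [hlast.2]⟩

lemma lsCount_mem_Icc (hL : 0 < L) (X : ℕ) :
    lsCount L S X ∈ Set.Icc
      (L * lsCount L S (X / (L + S)) + S * lsCount L S (X / (L + S) / (L + S)))
      (L * lsCount L S (X / (L + S)) + S * lsCount L S (X / (L + S) / (L + S)) +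
        (S + 1) * (L + S)) := by
  classical
  have hlow : ∀ d ∈ range L, Nat.count (fun q => memNLS L S ((L + S) * q + d)) (X / (L + S)) =
      lsCount L S (X / (L + S)) := fun d hd => by
    simp only [lsCount, memNLS_mul_add_iff_of_lt (mem_range.1 hd)]
  have hhigh : ∀ e ∈ range S, Nat.count (fun q => memNLS L S ((L + S) * ((L + S) * q) + (L + e)))
      (X / (L + S) / (L + S)) = lsCount L S (X / (L + S) / (L + S)) := fun e he => by
    simp only [lsCount, memNLS_mul_mul_add_iff hL (mem_range.1 he)]
  have h := count_mem_Icc_of_imp_memNLS (by omega) (memNLS L S) (fun _ => id) X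
  rw [sum_congr rfl hlow, sum_congr rfl hhigh] at h
  simpa [lsCount] using h

lemma lsCountLT_mem_Icc (hL : 0 < L) (hb : 1 < L + S) (hγ : 0 < γ) (c : ℝ) (X : ℕ) :
    lsCountLT L S γ c X ∈ Set.Icc
      (∑ d ∈ range L, lsCountLT L S γ (c / γ - d) (X / (L + S)) +
        ∑ e ∈ range S, lsCountLT L S γ ((c / γ - L) / γ - e) (X / (L + S) / (L + S)))
      (∑ d ∈ range L, lsCountLT L S γ (c / γ - d) (X / (L + S)) +
        ∑ e ∈ range S, lsCountLT L S γ ((c / γ - L) / γ - e) (X / (L + S) / (L + S)) +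
        (S + 1) * (L + S)) := by
  classical
  have hlow : ∀ d ∈ range L, Nat.count (fun q => memNLS L S ((L + S) * q + d) ∧
      lsPhi L S γ ((L + S) * q + d) < c) (X / (L + S)) =
      lsCountLT L S γ (c / γ - d) (X / (L + S)) := fun d hd => by
    simp only [lsCountLT, memNLS_mul_add_iff_of_lt (mem_range.1 hd),
      lsPhi_mul_add_of_lt hb γ (mem_range.1 hd), lt_sub_iff_add_lt', lt_div_iff₀' hγ]
  have hhigh : ∀ e ∈ range S, Nat.count (fun q => memNLS L S ((L + S) * ((L + S) * q) + (L + e)) ∧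
      lsPhi L S γ ((L + S) * ((L + S) * q) + (L + e)) < c) (X / (L + S) / (L + S)) =
      lsCountLT L S γ ((c / γ - L) / γ - e) (X / (L + S) / (L + S)) := fun e he => by
    simp only [lsCountLT, memNLS_mul_mul_add_iff hL (mem_range.1 he),
      lsPhi_mul_mul_add hL hb γ (mem_range.1 he), lt_sub_iff_add_lt', lt_div_iff₀' hγ]
  have h := count_mem_Icc_of_imp_memNLS (by omega) (fun n => memNLS L S n ∧ lsPhi L S γ n < c)
    (fun _ => And.left) X
  rw [sum_congr rfl hlow, sum_congr rfl hhigh] at h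
  simpa only [lsCountLT] using h

lemma pow_le_lsCount_pow (hL : 0 < L) (k : ℕ) : (L + S) ^ k ≤ lsCount L S ((L + S) ^ (2 * k)) := by
  induction k with
  | zero => simp [lsCount_one]
  | succ k ih =>
    have hb : 0 < L + S := by omega
    set Y := (L + S) ^ (2 * k)
    calc (L + S) ^ (k + 1) = (L + S) * (L + S) ^ k := pow_succ' _ _
      _ ≤ (L + S) * lsCount L S Y := by gcongr
      _ = L * lsCount L S Y + S * lsCount L S Y := add_mul _ _ _
      _ ≤ L * lsCount L S (Y * (L + S)) + S * lsCount L S Y := by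
        gcongr
        exact lsCount_mono L S (Nat.le_mul_of_pos_right Y hb)
      _ ≤ lsCount L S (Y * (L + S) * (L + S)) := by
        have h := (lsCount_mem_Icc (S := S) hL (Y * (L + S) * (L + S))).1
        rwa [Nat.mul_div_cancel _ hb, Nat.mul_div_cancel _ hb] at h
      _ = lsCount L S ((L + S) ^ (2 * (k + 1))) := by rw [mul_add_one, pow_add, sq, mul_assoc]

end Counting

section Deviation

variable {L S : ℕ} {γ : ℝ}

lemma exists_abs_lsCount_div_sub_le (hL : 0 < L) (hb : 1 < L + S) (hγ : 0 < γ)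
    (hroot : L * γ + S * γ ^ 2 = 1) (hSγ : S * γ < 1) :
    ∃ C, 0 ≤ C ∧ ∀ X, |(lsCount L S (X / (L + S)) : ℝ) - γ * lsCount L S X| ≤ C := by
  set E : ℝ := (((S + 1) * (L + S) : ℕ) : ℝ)
  have hgap : 0 < 1 - S * γ := sub_pos.2 hSγ
  set C := γ * E / (1 - S * γ)
  have hC0 : 0 ≤ C := by positivity
  have hC : S * γ * C + γ * E = C := by
    have : C * (1 - S * γ) = γ * E := div_mul_cancel₀ _ hgap.ne'
    linarith
  refine ⟨C, hC0, fun X => ?_⟩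
  induction X using Nat.strong_induction_on with
  | _ X ih =>
    rcases X.eq_zero_or_pos with rfl | hX
    · simpa [lsCount_zero] using hC0
    have hprev := ih (X / (L + S)) (Nat.div_lt_self hX hb)
    have hrec := abs_cast_sub_le_of_mem_Icc (lsCount_mem_Icc (S := S) hL X)
    rw [Nat.cast_add, Nat.cast_mul, Nat.cast_mul] at hrec
    set T₀ : ℝ := (lsCount L S X : ℝ)
    set T₁ : ℝ := (lsCount L S (X / (L + S)) : ℝ)
    set T₂ : ℝ := (lsCount L S (X / (L + S) / (L + S)) : ℝ)
    calc |T₁ - γ * T₀|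
        = |-(S * γ * (T₂ - γ * T₁)) - γ * (T₀ - (L * T₁ + S * T₂))| := by
          congr 1
          linear_combination -T₁ * hroot
      _ ≤ |S * γ * (T₂ - γ * T₁)| + |γ * (T₀ - (L * T₁ + S * T₂))| := by
          simpa only [abs_neg] using abs_sub (-(S * γ * (T₂ - γ * T₁))) _
      _ = S * γ * |T₂ - γ * T₁| + γ * |T₀ - (L * T₁ + S * T₂)| := by
          rw [abs_mul, abs_mul γ, abs_of_nonneg (by positivity : 0 ≤ S * γ), abs_of_pos hγ]
      _ ≤ S * γ * C + γ * E := by gcongr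
      _ = C := hC

lemma abs_lsDev_le_of_le_mul (hL : 0 < L) (hb : 1 < L + S) (hγ : 0 < γ)
    (hroot : L * γ + S * γ ^ 2 = 1) {B C : ℝ} {X : ℕ}
    (hdev : ∀ t ∈ Set.Icc (0 : ℝ) 1, |lsDev L S γ t (X / (L + S))| ≤ B)
    (hdefect : |(lsCount L S (X / (L + S)) : ℝ) - γ * lsCount L S X| ≤ C)
    {c : ℝ} (hc0 : 0 ≤ c) (hcL : c ≤ L * γ) :
    |lsDev L S γ c X| ≤ ((S + 1) * (L + S) : ℕ) + B + L * C := by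
  set x := c / γ
  have hxγ : x * γ = c := div_mul_cancel₀ _ hγ.ne'
  have hx0 : 0 ≤ x := by positivity
  have hxL : x ≤ L := (div_le_iff₀ hγ).2 hcL
  have hhigh : ∑ e ∈ range S, lsCountLT L S γ ((x - L) / γ - e) (X / (L + S) / (L + S)) = 0 :=
    sum_eq_zero fun e _ => lsCountLT_of_nonpos L S hγ.le (by
      have := div_nonpos_of_nonpos_of_nonneg (sub_nonpos.2 hxL) hγ.le
      linarith [(Nat.cast_nonneg e : (0 : ℝ) ≤ e)]) _
  have hrec := abs_cast_sub_le_of_mem_Icc (lsCountLT_mem_Icc hL hb hγ c X)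
  rw [hhigh, add_zero, Nat.cast_sum] at hrec
  have hlow := abs_sum_shift_sub_mul_le
    (F := fun t => (lsCountLT L S γ t (X / (L + S)) : ℝ)) (M := lsCount L S (X / (L + S)))
    (fun t ht => by simp [lsCountLT_of_nonpos L S hγ.le ht])
    (fun t ht => by simp [lsCountLT_of_one_le hL hb hγ hroot ht]) hdev hx0 hxL
  have hscale : |x * (lsCount L S (X / (L + S)) - γ * lsCount L S X)| ≤ L * C := by
    rw [abs_mul, abs_of_nonneg hx0]
    gcongr
  calc |lsDev L S γ c X| = _ := by
        rw [lsDev]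
        congr 1
        linear_combination (lsCount L S X : ℝ) * hxγ
    _ ≤ _ := (abs_add_three _ _ _).trans (add_le_add (add_le_add hrec hlow) hscale)

lemma abs_lsDev_le_of_mul_le (hL : 0 < L) (hb : 1 < L + S) (hγ : 0 < γ)
    (hroot : L * γ + S * γ ^ 2 = 1) {B C : ℝ} {X : ℕ}
    (hdev : ∀ t ∈ Set.Icc (0 : ℝ) 1, |lsDev L S γ t (X / (L + S) / (L + S))| ≤ B)
    (hdefect : ∀ Y, |(lsCount L S (Y / (L + S)) : ℝ) - γ * lsCount L S Y| ≤ C)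
    {c : ℝ} (hcL : L * γ ≤ c) (hc1 : c ≤ 1) :
    |lsDev L S γ c X| ≤ ((S + 1) * (L + S) : ℕ) + B + (L + 2 * S) * C := by
  have hLx : L ≤ c / γ := (le_div_iff₀ hγ).2 hcL
  set y := (c / γ - L) / γ
  have hyγ : L * γ + y * γ ^ 2 = c := by
    simp only [y]
    field_simp
    ring
  have hy0 : 0 ≤ y := div_nonneg (sub_nonneg.2 hLx) hγ.le
  have hyS : y ≤ S := le_of_mul_le_mul_right (by linarith) (pow_pos hγ 2)
  have hrec := abs_cast_sub_le_of_mem_Icc (lsCountLT_mem_Icc hL hb hγ c X)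
  rw [Nat.cast_add, Nat.cast_sum, Nat.cast_sum] at hrec
  have hγ1 := le_one_of_root hL hγ hroot
  have hone (Y : ℕ) (t : ℝ) (ht : 1 ≤ t) : (lsCountLT L S γ t Y : ℝ) = lsCount L S Y := by
    rw [lsCountLT_of_one_le hL hb hγ hroot ht]
  rw [sum_shift_eq_mul (hone _) hLx] at hrec
  have hhigh := abs_sum_shift_sub_mul_le
    (F := fun t => (lsCountLT L S γ t (X / (L + S) / (L + S)) : ℝ))
    (fun t ht => by simp [lsCountLT_of_nonpos L S hγ.le ht]) (hone _) hdev hy0 hyS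
  have : 0 ≤ C := (abs_nonneg _).trans (hdefect 0)
  have hscale : |(L + y * γ) * (lsCount L S (X / (L + S)) - γ * lsCount L S X)| ≤ (L + S) * C := by
    rw [abs_mul, abs_of_nonneg (by positivity : 0 ≤ L + y * γ)]
    gcongr
    · exact (mul_le_of_le_one_right hy0 hγ1).trans hyS
    · exact hdefect X
  have hscale' : |y * (lsCount L S (X / (L + S) / (L + S)) - γ * lsCount L S (X / (L + S)))|
      ≤ S * C := by
    rw [abs_mul, abs_of_nonneg hy0]
    gcongr
    exact hdefect _
  calc |lsDev L S γ c X| = _ := by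
        rw [lsDev]
        congr 1
        linear_combination (lsCount L S X : ℝ) * hyγ
    _ ≤ _ := (abs_add_three _ _ _).trans
        (add_le_add (add_le_add hrec hhigh) ((abs_add_le _ _).trans (add_le_add hscale hscale')))
    _ = _ := by ring

lemma exists_abs_lsDev_le (hL : 0 < L) (hb : 1 < L + S) (hγ : 0 < γ)
    (hroot : L * γ + S * γ ^ 2 = 1) (hSγ : S * γ < 1) :
    ∃ K : ℝ, 0 ≤ K ∧ ∀ k X : ℕ, X < (L + S) ^ k → ∀ c ∈ Set.Icc (0 : ℝ) 1,
      |lsDev L S γ c X| ≤ K * k := by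
  obtain ⟨C, hC0, hC⟩ := exists_abs_lsCount_div_sub_le hL hb hγ hroot hSγ
  set K : ℝ := ((S + 1) * (L + S) : ℕ) + (L + 2 * S) * C
  refine ⟨K, by positivity, fun k => ?_⟩
  induction k with
  | zero =>
    intro X hX c _
    obtain rfl : X = 0 := by simpa using hX
    simp [lsDev, lsCountLT, lsCount_zero]
  | succ k ih =>
    intro X hX c hc
    have hX₁ : X / (L + S) < (L + S) ^ k := Nat.div_lt_of_lt_mul (by rwa [← pow_succ'])
    push_cast
    rcases le_total c (L * γ) with hcL | hcL
    · have h := abs_lsDev_le_of_le_mul hL hb hγ hroot (ih _ hX₁) (hC X) hc.1 hcL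
      nlinarith [mul_nonneg S.cast_nonneg hC0]
    · have hX₂ : X / (L + S) / (L + S) < (L + S) ^ k := (Nat.div_le_self _ _).trans_lt hX₁
      have h := abs_lsDev_le_of_mul_le hL hb hγ hroot (ih _ hX₂) hC hcL hc.2
      linarith

end Deviation

section Enumeration

variable {L S : ℕ}

lemma nth_memNLS_lt (hL : 0 < L) {m k : ℕ} (hm : m < (L + S) ^ k) :
    Nat.nth (memNLS L S) m < (L + S) ^ (2 * k) := by
  classical
  exact Nat.nth_lt_of_lt_count (hm.trans_le (pow_le_lsCount_pow hL k))

lemma lsCount_nth (hL : 0 < L) (hb : 1 < L + S) (m : ℕ) :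
    lsCount L S (Nat.nth (memNLS L S) m) = m := by
  classical
  exact Nat.count_nth_of_infinite (infinite_memNLS hL hb) m

open Classical in
lemma lsCountLT_nth (hL : 0 < L) (hb : 1 < L + S) {γ : ℝ} (hγ : 0 ≤ γ) (c : ℝ) (m : ℕ) :
    lsCountLT L S γ c (Nat.nth (memNLS L S) m) =
      Nat.count (fun i => lsSeq L S γ (i + 1) ∈ Set.Ico 0 c) m := by
  rw [lsCountLT, count_and_eq_count_nth, Nat.count_nth_of_infinite (infinite_memNLS hL hb)]
  simp only [lsSeq, Nat.add_sub_cancel, Set.mem_Ico, lsPhi_nonneg L S hγ, true_and]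

open Classical in
/-- The strip `[0, a) × [0, 1)` contains exactly the first `⌈a N⌉` of the points
`((n - 1) / N, x n)`. -/
lemma sum_indicator_mul_indicator_eq_count (x : ℕ → ℝ) {N : ℕ} (hN : 0 < N) {a : ℝ} (ha : a ≤ 1)
    (c : ℝ) :
    ∑ j ∈ Icc 1 N, Set.indicator (Set.Ico (0 : ℝ) a) (fun _ => (1 : ℝ)) (((j : ℝ) - 1) / N) *
        Set.indicator (Set.Ico (0 : ℝ) c) (fun _ => (1 : ℝ)) (x j) =
      Nat.count (fun i => x (i + 1) ∈ Set.Ico 0 c) ⌈a * N⌉₊ := by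
  have hNpos : (0 : ℝ) < N := by exact_mod_cast hN
  have hle : ⌈a * N⌉₊ ≤ N := Nat.ceil_le.2 (mul_le_of_le_one_left hNpos.le ha)
  have hstrip (i : ℕ) : (((i + 1 : ℕ) : ℝ) - 1) / N ∈ Set.Ico 0 a ↔ i < ⌈a * N⌉₊ := by
    rw [Nat.lt_ceil, Set.mem_Ico, div_lt_iff₀ hNpos, Nat.cast_add_one, add_sub_cancel_right]
    exact and_iff_right (by positivity)
  have hfilter : {i ∈ range N | i < ⌈a * N⌉₊} = range ⌈a * N⌉₊ := by
    ext i
    simp only [mem_filter, mem_range]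
    omega
  rw [Nat.count_eq_card_filter_range, ← hfilter, filter_filter, card_filter, Nat.cast_sum,
    ← Ico_add_one_right_eq_Icc, sum_Ico_eq_sum_range, Nat.add_sub_cancel]
  refine sum_congr rfl fun i _ => ?_
  simp only [add_comm 1 i, Set.indicator_apply, hstrip]
  split_ifs <;> simp_all

open Classical in
lemma mul_discrep2_le (x : ℕ → ℝ) {N : ℕ} (hN : 0 < N) {B : ℝ}
    (hx : ∀ m ≤ N, ∀ c ∈ Set.Icc (0 : ℝ) 1,
      |(Nat.count (fun i => x (i + 1) ∈ Set.Ico 0 c) m : ℝ) - c * m| ≤ B) :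
    N * discrep2 (fun n => (((n : ℝ) - 1) / N, x n)) N ≤ B + 1 := by
  have hNpos : (0 : ℝ) < N := by exact_mod_cast hN
  have : Nonempty {p : ℝ × ℝ // 0 < p.1 ∧ p.1 ≤ 1 ∧ 0 < p.2 ∧ p.2 ≤ 1} :=
    ⟨⟨(1, 1), by norm_num⟩⟩
  rw [← le_div_iff₀' hNpos]
  refine ciSup_le ?_
  rintro ⟨⟨a, c⟩, ha0, ha1, hc0, hc1⟩
  dsimp only at ha0 ha1 hc0 hc1 ⊢
  rw [sum_indicator_mul_indicator_eq_count x hN ha1, le_div_iff₀ hNpos]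
  set m := ⌈a * N⌉₊
  set A : ℝ := (Nat.count (fun i => x (i + 1) ∈ Set.Ico 0 c) m : ℝ)
  have hmN : m ≤ N := Nat.ceil_le.2 (mul_le_of_le_one_left hNpos.le ha1)
  have hm : |(m : ℝ) - a * N| ≤ 1 := by
    rw [abs_of_nonneg (sub_nonneg.2 (Nat.le_ceil _))]
    linarith [Nat.ceil_lt_add_one (by positivity : 0 ≤ a * N)]
  calc |A / N - a * c| * N = |(A - c * m) + c * (m - a * N)| := by
        rw [← abs_of_pos hNpos, ← abs_mul, abs_of_pos hNpos]
        congr 1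
        field_simp
        ring
    _ ≤ |A - c * m| + c * |m - a * N| := by
        simpa only [abs_mul, abs_of_pos hc0] using abs_add_le (A - c * m) (c * (m - a * N))
    _ ≤ B + 1 := add_le_add (hx m hmN c ⟨hc0.le, hc1⟩) (mul_le_one₀ hc1 (abs_nonneg _) hm)

end Enumeration

lemma exists_mul_discrep2_le_log (L S : ℕ) {γ : ℝ} (hL : 0 < L) (hb : 1 < L + S) (hγ : 0 < γ)
    (hroot : L * γ + S * γ ^ 2 = 1) (hSγ : S * γ < 1) :
    ∃ K : ℝ, 0 ≤ K ∧ ∀ N : ℕ, 0 < N →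
      N * discrep2 (fun n => (((n : ℝ) - 1) / N, lsSeq L S γ n)) N ≤
        K * (Nat.log (L + S) N + 1) + 1 := by
  classical
  obtain ⟨K, hK0, hK⟩ := exists_abs_lsDev_le hL hb hγ hroot hSγ
  refine ⟨2 * K, by positivity, fun N hN => mul_discrep2_le _ hN fun m hm c hc => ?_⟩
  have hnth := nth_memNLS_lt hL (hm.trans_lt (Nat.lt_pow_succ_log_self hb N))
  have hdev := hK _ _ hnth c hc
  rw [lsDev, lsCountLT_nth hL hb hγ.le, lsCount_nth hL hb] at hdev
  refine hdev.trans_eq ?_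
  push_cast
  ring

/-- For `S = 0` the points `ξ^n` form the van der Corput sequence in base `L`. -/
theorem ls_vdc_discrepancy_SleL_general (L S : ℕ) (hSL : S ≤ L)
    (γ : ℝ) (hγ0 : 0 < γ) (hγ1 : γ < 1)
    (hroot : (L : ℝ) * γ + (S : ℝ) * γ ^ 2 = 1) :
    ∃ C₁ : ℝ, 0 < C₁ ∧ ∀ N : ℕ, 2 ≤ N →
      (N : ℝ) * discrep2 (fun n => (((n : ℝ) - 1) / N, lsSeq L S γ n)) N
        ≤ C₁ * Real.log N := by
  have hb : 1 < L + S := one_lt_add_of_root hγ0 hγ1 hroot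
  obtain ⟨K, hK0, hK⟩ := exists_mul_discrep2_le_log L S (by omega) hb hγ0 hroot
    (mul_lt_one_of_root hSL hγ0 hroot)
  have : 0 < Real.log 2 := Real.log_pos one_lt_two
  refine ⟨(2 * K + 1) / Real.log 2, by positivity, fun N hN => ?_⟩
  have hone : 1 ≤ Real.logb 2 N :=
    (Real.le_logb_iff_rpow_le one_lt_two (by positivity)).2 (by simpa using hN)
  have hlog : (Nat.log (L + S) N : ℝ) ≤ Real.logb 2 N :=
    (Nat.cast_le.2 (Nat.log_anti_left one_lt_two hb)).trans (Real.natLog_le_logb N 2)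
  calc (N : ℝ) * discrep2 (fun n => (((n : ℝ) - 1) / N, lsSeq L S γ n)) N
      ≤ K * (Nat.log (L + S) N + 1) + 1 := hK N (by omega)
    _ ≤ K * (Real.logb 2 N + Real.logb 2 N) + Real.logb 2 N := by gcongr
    _ = (2 * K + 1) / Real.log 2 * Real.log N := by
        rw [← Real.log_div_log]
        ring


/-- If `S ≤ L`, the `(L,S)`-point set à la van der Corput
`P_{L,S}(N) = {((n−1)/N, ξⁿ) : n = 1,…,N}` satisfies
`N · D₂(P_{L,S}(N)) ≤ C₁ log N` for all `N ≥ 2`. -/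
theorem ls_vdc_discrepancy_SleL (L S : ℕ) (hL : 0 < L) (hS : 0 < S) (hSL : S ≤ L)
    (γ : ℝ) (hγ0 : 0 < γ) (hγ1 : γ < 1)
    (hroot : (L : ℝ) * γ + (S : ℝ) * γ ^ 2 = 1) :
    ∃ C₁ : ℝ, 0 < C₁ ∧ ∀ N : ℕ, 2 ≤ N →
      (N : ℝ) * discrep2 (fun n => (((n : ℝ) - 1) / N, lsSeq L S γ n)) N
        ≤ C₁ * Real.log N := by
  exact ls_vdc_discrepancy_SleL_general L S hSL γ hγ0 hγ1 hroot
end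
end

section
/- Let (x_j)_{j≥1} be any sequence of points of [0,1), let N ≥ 1 be an integer, and let a, b ∈ (0,1]. Set M = #{ j : 1 ≤ j ≤ N and (j−1)/N < a }. Then | (1/N) Σ_{j=1}^{N} χ_{[0,a)}((j−1)/N) · χ_{[0,b)}(x_j) − ab | ≤ (M/N) · D(x_1, …, x_M) + 1/N, where D(x_1,…,x_M) is the one-dimensional discrepancy of the first M terms. (This is the key inequality reducing the two-dimensional discrepancy of the van der Corput-type point set {((j−1)/N, x_j)} to the one-dimensional discrepancy of (x_j).) -/
open Finset Real

noncomputable section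

/-!
The points of the grid `(j - 1) / N`, `1 ≤ j ≤ N`, lying below `a` are exactly the first
`M = ⌈a * N⌉` ones. Hence the proportion of points `((j - 1) / N, x j)` in `[0, a) × t` is `M / N`
times the proportion of `x 1, …, x M` in `t`. Replacing the second factor by `b` when `t = [0, b)`
costs at most `M / N` times the discrepancy, and then replacing `M / N` by `a` costs at most
`|M / N - a| * b ≤ 1 / N`.
-/

section Grid

variable {K : Type*} [Field K] [LinearOrder K] [IsStrictOrderedRing K] [FloorSemiring K]

theorem filter_sub_one_div_lt (N : ℕ) {a : K} (ha : a ≤ 1) :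
    (Finset.Icc 1 N).filter (fun j : ℕ => ((j : K) - 1) / N < a) = Finset.Icc 1 ⌈a * N⌉₊ := by
  obtain rfl | hN := N.eq_zero_or_pos
  · simp
  have hN' : (0 : K) < N := Nat.cast_pos.2 hN
  have ceil_le : ⌈a * N⌉₊ ≤ N := Nat.ceil_le.2 (mul_le_of_le_one_left hN'.le ha)
  ext j
  simp only [Finset.mem_filter, Finset.mem_Icc, div_lt_iff₀ hN']
  obtain _ | k := j
  · simp
  · rw [Nat.cast_succ, add_sub_cancel_right, ← Nat.lt_ceil]
    omega

theorem card_filter_sub_one_div_lt (N : ℕ) {a : K} (ha : a ≤ 1) :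
    ((Finset.Icc 1 N).filter (fun j : ℕ => ((j : K) - 1) / N < a)).card = ⌈a * N⌉₊ := by
  rw [filter_sub_one_div_lt N ha, Nat.card_Icc, Nat.add_sub_cancel]

theorem sum_indicator_sub_one_div_mul {R : Type*} [NonAssocSemiring R] (N : ℕ) {a : K}
    (ha : a ≤ 1) (f : ℕ → R) :
    ∑ j ∈ Finset.Icc 1 N, (Set.Ico 0 a).indicator (fun _ => 1) (((j : K) - 1) / N) * f j =
      ∑ j ∈ Finset.Icc 1 ⌈a * N⌉₊, f j := by
  rw [← filter_sub_one_div_lt N ha, Finset.sum_filter]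
  refine Finset.sum_congr rfl fun j hj => ?_
  have one_le : (1 : K) ≤ j := Nat.one_le_cast.2 (Finset.mem_Icc.1 hj).1
  have nonneg : 0 ≤ ((j : K) - 1) / N := div_nonneg (sub_nonneg.2 one_le) N.cast_nonneg
  simp [Set.indicator_apply, nonneg]

theorem abs_natCeil_mul_div_sub_le {a r : K} (ha : 0 ≤ a) (hr : 0 < r) :
    |⌈a * r⌉₊ / r - a| ≤ 1 / r := by
  have le_ceil := Nat.le_ceil (a * r)
  have ceil_le := (Nat.ceil_lt_add_one (mul_nonneg ha hr.le)).le
  rw [div_sub' hr.ne', abs_div, abs_of_pos hr]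
  gcongr
  rw [abs_le]
  constructor <;> linarith

end Grid

section RelFreq

variable {α : Type*}

/-- The relative frequency with which the terms `x 1, …, x N` fall into `s`: the proportion that
`discrep` and `discrep2` compare with the volume of an interval or a rectangle. Indices start at
`1`, and the value is `0` for `N = 0`. -/
def relFreq (x : ℕ → α) (N : ℕ) (s : Set α) : ℝ :=
  (∑ j ∈ Finset.Icc 1 N, s.indicator (fun _ => (1 : ℝ)) (x j)) / N

theorem relFreq_nonneg (x : ℕ → α) (N : ℕ) (s : Set α) : 0 ≤ relFreq x N s :=
  div_nonneg (Finset.sum_nonneg fun _ _ => Set.indicator_nonneg (fun _ _ => zero_le_one) _)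
    N.cast_nonneg

theorem relFreq_le_one (x : ℕ → α) (N : ℕ) (s : Set α) : relFreq x N s ≤ 1 := by
  refine div_le_one_of_le₀ ?_ N.cast_nonneg
  calc ∑ j ∈ Finset.Icc 1 N, s.indicator (fun _ => (1 : ℝ)) (x j)
      ≤ ∑ _j ∈ Finset.Icc 1 N, (1 : ℝ) :=
        Finset.sum_le_sum fun _ _ => Set.indicator_le_self' (fun _ _ => zero_le_one) _
    _ = N := by simp

theorem abs_relFreq_Ico_sub_le_discrep (x : ℕ → ℝ) (N : ℕ) {a b : ℝ} (ha : 0 ≤ a) (hab : a < b)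
    (hb : b ≤ 1) : |relFreq x N (Set.Ico a b) - (b - a)| ≤ discrep x N := by
  refine le_ciSup (f := fun p : {p : ℝ × ℝ // 0 ≤ p.1 ∧ p.1 < p.2 ∧ p.2 ≤ 1} =>
    |relFreq x N (Set.Ico p.1.1 p.1.2) - (p.1.2 - p.1.1)|) ⟨1, ?_⟩ ⟨(a, b), ha, hab, hb⟩
  rintro _ ⟨⟨⟨c, d⟩, hc, hcd, hd⟩, rfl⟩
  exact abs_sub_le_of_nonneg_of_le (relFreq_nonneg ..) (relFreq_le_one ..)
    (sub_nonneg.2 hcd.le) ((sub_le_self d hc).trans hd)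

theorem relFreq_prod {β : Type*} (y : ℕ → β) (x : ℕ → α) (N : ℕ) (s : Set β) (t : Set α) :
    relFreq (fun j => (y j, x j)) N (s ×ˢ t) =
      (∑ j ∈ Finset.Icc 1 N,
        s.indicator (fun _ => (1 : ℝ)) (y j) * t.indicator (fun _ => (1 : ℝ)) (x j)) / N := by
  simp only [relFreq, ← Pi.one_def, Set.indicator_prod_one]

theorem relFreq_Ico_prod (x : ℕ → α) (N : ℕ) {a : ℝ} (ha : a ≤ 1) (t : Set α) :
    relFreq (fun j : ℕ => (((j : ℝ) - 1) / N, x j)) N (Set.Ico 0 a ×ˢ t) =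
      ⌈a * N⌉₊ / N * relFreq x ⌈a * N⌉₊ t := by
  rw [relFreq_prod, sum_indicator_sub_one_div_mul N ha, relFreq]
  obtain h | h := eq_or_ne ⌈a * N⌉₊ 0
  · simp [h]
  · field_simp

theorem abs_relFreq_Ico_prod_sub_mul_le (x : ℕ → α) {N : ℕ} (hN : 0 < N) {a v : ℝ}
    (ha : a ∈ Set.Icc 0 1) (t : Set α) (hv : |v| ≤ 1) :
    |relFreq (fun j : ℕ => (((j : ℝ) - 1) / N, x j)) N (Set.Ico 0 a ×ˢ t) - a * v| ≤
      ⌈a * N⌉₊ / N * |relFreq x ⌈a * N⌉₊ t - v| + 1 / N := by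
  rw [relFreq_Ico_prod x N ha.2]
  set c : ℝ := ⌈a * N⌉₊ / N
  set p := relFreq x ⌈a * N⌉₊ t
  have hc : 0 ≤ c := by positivity
  have c_near : |c - a| ≤ 1 / N := abs_natCeil_mul_div_sub_le ha.1 (Nat.cast_pos.2 hN)
  calc |c * p - a * v|
      = |c * (p - v) + (c - a) * v| := by congr 1; ring
    _ ≤ |c * (p - v)| + |(c - a) * v| := abs_add_le _ _
    _ = c * |p - v| + |c - a| * |v| := by rw [abs_mul, abs_mul, abs_of_nonneg hc]
    _ ≤ c * |p - v| + 1 / N := by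
        gcongr
        exact (mul_le_of_le_one_right (abs_nonneg _) hv).trans c_near

end RelFreq

theorem vdc_key_inequality_general (x : ℕ → ℝ) (N : ℕ) (hN : 1 ≤ N) (a b : ℝ)
    (ha : a ∈ Set.Ioc (0 : ℝ) 1) (hb : b ∈ Set.Ioc (0 : ℝ) 1)
    (M : ℕ)
    (hM : M = ((Finset.Icc 1 N).filter (fun j : ℕ => ((j : ℝ) - 1) / (N : ℝ) < a)).card) :
    |(∑ j ∈ Finset.Icc 1 N,
        Set.indicator (Set.Ico (0 : ℝ) a) (fun _ => (1 : ℝ)) (((j : ℝ) - 1) / N) *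
        Set.indicator (Set.Ico (0 : ℝ) b) (fun _ => (1 : ℝ)) (x j)) / N - a * b|
      ≤ ((M : ℝ) / N) * discrep x M + 1 / N := by
  have hM_ceil : M = ⌈a * N⌉₊ := hM.trans (card_filter_sub_one_div_lt N ha.2)
  have rect := abs_relFreq_Ico_prod_sub_mul_le x hN (Set.Ioc_subset_Icc_self ha)
    (Set.Ico 0 b) (abs_le.2 ⟨by linarith [hb.1], hb.2⟩)
  have interval := abs_relFreq_Ico_sub_le_discrep x M le_rfl hb.1 hb.2
  rw [relFreq_prod, ← hM_ceil] at rect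
  rw [sub_zero] at interval
  exact rect.trans (by gcongr)

/-- The key inequality reducing the two-dimensional discrepancy of the
van der Corput-type point set `{((j−1)/N, x_j)}` to the one-dimensional discrepancy of
`(x_j)`: for `a, b ∈ (0,1]` and `M = #{1 ≤ j ≤ N : (j−1)/N < a}`,
`|(1/N) Σ_{j=1}^N χ_{[0,a)}((j−1)/N) χ_{[0,b)}(x_j) − ab| ≤ (M/N) D(x_1,…,x_M) + 1/N`. -/
theorem vdc_key_inequality (x : ℕ → ℝ) (hx : ∀ j, x j ∈ Set.Ico (0 : ℝ) 1)
    (N : ℕ) (hN : 1 ≤ N) (a b : ℝ)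
    (ha : a ∈ Set.Ioc (0 : ℝ) 1) (hb : b ∈ Set.Ioc (0 : ℝ) 1)
    (M : ℕ)
    (hM : M = ((Finset.Icc 1 N).filter (fun j : ℕ => ((j : ℝ) - 1) / (N : ℝ) < a)).card) :
    |(∑ j ∈ Finset.Icc 1 N,
        Set.indicator (Set.Ico (0 : ℝ) a) (fun _ => (1 : ℝ)) (((j : ℝ) - 1) / N) *
        Set.indicator (Set.Ico (0 : ℝ) b) (fun _ => (1 : ℝ)) (x j)) / N - a * b|
      ≤ ((M : ℝ) / N) * discrep x M + 1 / N :=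
  vdc_key_inequality_general x N hN a b ha hb M hM
end
end
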